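/- Let R be a right artinian ring, P an indecomposable projective right R-module containing two non-isomorphic simple modules S₁ and S₂ in its socle. Then the modules M₁ = P/S₁, M₂ = P/S₂, M₃ = P/(S₁ ⊕ S₂) are pairwise non-isomorphic indecomposable modules and φ(M₁ ⊕ M₂ ⊕ M₃) ≥ 1. -/

import Mathlib

open Module Function

universe u

variable (R : Type u) [Ring R]

/-- A finitely generated right `R`-module, encoded as a module over `Rᵐᵒᵖ`. -/
structure FGMod where
  carrier : Type u
  [isAddCommGroup : AddCommGroup carrier]
  [isModule : Module Rᵐᵒᵖ carrier]
  [isFinite : Module.Finite Rᵐᵒᵖ carrier]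

attribute [instance] FGMod.isAddCommGroup FGMod.isModule FGMod.isFinite

instance : CoeSort (FGMod R) (Type u) := ⟨FGMod.carrier⟩

variable {R}

/-- Isomorphism of f.g. right modules. -/
def FGMod.Iso (M N : FGMod R) : Prop := Nonempty (M ≃ₗ[Rᵐᵒᵖ] N)

/-- Direct sum. -/
def FGMod.prod (M N : FGMod R) : FGMod R := ⟨M × N⟩

/-- `M^k`, the direct sum of `k` copies of `M`. -/
def FGMod.pow (M : FGMod R) (k : ℕ) : FGMod R := ⟨Fin k → M⟩

/-- `N` is (isomorphic to) a direct summand of `M`. -/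
def FGMod.IsSummand (N M : FGMod R) : Prop :=
  ∃ A B : Submodule Rᵐᵒᵖ M, IsCompl A B ∧ Nonempty (N ≃ₗ[Rᵐᵒᵖ] A)

/-- `M` is indecomposable. -/
def FGMod.Indec (M : FGMod R) : Prop :=
  Nontrivial M ∧ ∀ A B : Submodule Rᵐᵒᵖ M, IsCompl A B → A = ⊥ ∨ B = ⊥

/-- `M` is projective. -/
def FGMod.Proj (M : FGMod R) : Prop := Module.Projective Rᵐᵒᵖ M

/-- `f : P → M` is a projective cover: `P` projective, `f` surjective with superfluous kernel. -/
def IsProjCover (M P : FGMod R) (f : P →ₗ[Rᵐᵒᵖ] M) : Prop :=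
  P.Proj ∧ Surjective f ∧ ∀ N : Submodule Rᵐᵒᵖ P, N ⊔ LinearMap.ker f = ⊤ → N = ⊤

/-- `N` is a (first) syzygy of `M`: the kernel of a projective cover of `M`. -/
def IsSyzygy (M N : FGMod R) : Prop :=
  ∃ (P : FGMod R) (f : P →ₗ[Rᵐᵒᵖ] M),
    IsProjCover M P f ∧ Nonempty (N ≃ₗ[Rᵐᵒᵖ] LinearMap.ker f)

/-- `N` is an `n`-th syzygy of `M`. -/
def IsSyzygyN : ℕ → FGMod R → FGMod R → Prop
  | 0, M, N => M.Iso N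
  | n+1, M, N => ∃ L, IsSyzygy M L ∧ IsSyzygyN n L N

/-- `M` has projective dimension at most `n`. -/
def HasPdLE : ℕ → FGMod R → Prop
  | 0, M => M.Proj
  | n+1, M => M.Proj ∨ ∃ N, IsSyzygy M N ∧ HasPdLE n N

/-- `M` has finite projective dimension. -/
def FinPd (M : FGMod R) : Prop := ∃ n, HasPdLE n M

/-- The projective dimension of `M` (junk value if infinite). -/
noncomputable def pdIT (M : FGMod R) : ℕ := sInf {n | HasPdLE n M}

variable (R)

/-- The Igusa–Todorov relations in the free abelian group on f.g. right modules:
`[A] - [B] - [C]` whenever `A ≅ B ⊕ C`, and `[P]` for `P` projective. -/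
def ITRel : Set (FreeAbelianGroup (FGMod R)) :=
  {x | ∃ A B C : FGMod R, Nonempty (A ≃ₗ[Rᵐᵒᵖ] (B × C : Type u)) ∧
        x = FreeAbelianGroup.of A - FreeAbelianGroup.of B - FreeAbelianGroup.of C} ∪
  {x | ∃ P : FGMod R, P.Proj ∧ x = FreeAbelianGroup.of P}

/-- The Igusa–Todorov group `K`. -/
def ITK := FreeAbelianGroup (FGMod R) ⧸ AddSubgroup.closure (ITRel R)

noncomputable instance : AddCommGroup (ITK R) :=
  QuotientAddGroup.Quotient.addCommGroup _

/-- The class `[M]` in `K`. -/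
noncomputable def ITcls (M : FGMod R) : ITK R := QuotientAddGroup.mk (FreeAbelianGroup.of M)

/-- `⟨M⟩`: the subgroup of `K` generated by the indecomposable non-projective
direct summands of `M`. -/
noncomputable def ITgen (M : FGMod R) : AddSubgroup (ITK R) :=
  AddSubgroup.closure
    {x | ∃ N : FGMod R, N.IsSummand M ∧ N.Indec ∧ ¬N.Proj ∧ x = ITcls R N}

/-- The rank of a subgroup of `K`. -/
noncomputable def rkIT (H : AddSubgroup (ITK R)) : ℕ :=
  Module.finrank ℤ (AddSubgroup.toIntSubmodule H)

/-- `OmK` is a syzygy endomorphism of `K`: a group endomorphism sending `[M]` to `[ΩM]`. -/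
def IsSyzygyEnd (OmK : AddMonoid.End (ITK R)) : Prop :=
  ∀ M N : FGMod R, IsSyzygy M N → OmK (ITcls R M) = ITcls R N

/-- The Igusa–Todorov function `φ`: the least `n` such that the rank of
`Ω^i⟨M⟩` equals that of `Ω^n⟨M⟩` for all `i ≥ n`. -/
noncomputable def phiIT (OmK : AddMonoid.End (ITK R)) (M : FGMod R) : ℕ :=
  sInf {n | ∀ i, n ≤ i →
    rkIT R ((ITgen R M).map ((OmK ^ i : AddMonoid.End (ITK R)) : ITK R →+ ITK R))
      = rkIT R ((ITgen R M).map ((OmK ^ n : AddMonoid.End (ITK R)) : ITK R →+ ITK R))}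

/-- The second Igusa–Todorov function `ψ`. -/
noncomputable def psiIT (OmK : AddMonoid.End (ITK R)) (M : FGMod R) : ℕ :=
  phiIT R OmK M + sSup {d | ∃ N X : FGMod R, IsSyzygyN (phiIT R OmK M) M N ∧
      X.IsSummand N ∧ FinPd X ∧ d = pdIT X}

/-- The socle of a module: the sum of its simple submodules. -/
def socleIT (M : FGMod R) : Submodule Rᵐᵒᵖ M :=
  sSup {S : Submodule Rᵐᵒᵖ M | IsSimpleModule Rᵐᵒᵖ S}



section Generic

variable {A : Type*} [Ring A]

/-- indecomposability for a plain module. -/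
def IndecM (A : Type*) [Ring A] (M : Type*) [AddCommGroup M] [Module A M] : Prop :=
  Nontrivial M ∧ ∀ U V : Submodule A M, IsCompl U V → U = ⊥ ∨ V = ⊥

variable {X N N' M : Type*} [AddCommGroup X] [Module A X] [AddCommGroup N] [Module A N]
  [AddCommGroup N'] [Module A N'] [AddCommGroup M] [Module A M]

theorem IndecM.congr (e : M ≃ₗ[A] N) (h : IndecM A M) : IndecM A N := by
  refine ⟨?_, fun U V hUV => ?_⟩
  · have := h.1
    exact e.symm.toEquiv.nontrivial
  · have := h.2 _ _ ((Submodule.orderIsoMapComap e.symm).isCompl hUV)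
    simpa using this

theorem IndecM.unit_or [IsArtinian A X] [IsNoetherian A X] (hX : IndecM A X)
    (f g : Module.End A X) (h : f + g = 1) : IsUnit f ∨ IsUnit g := by
  obtain ⟨n, hn⟩ := Filter.eventually_atTop.1 f.eventually_isCompl_ker_pow_range_pow
  have h1 := hn (n+1) (by omega)
  rcases hX.2 _ _ h1 with h2 | h2
  · left
    rw [Module.End.isUnit_iff]
    apply IsArtinian.bijective_of_injective_endomorphism
    rw [LinearMap.ker_eq_bot] at h2
    rw [pow_succ] at h2
    exact Function.Injective.of_comp (f := ⇑(f ^ n)) (g := f) h2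
  · right
    have h3 : f ^ (n+1) = 0 := LinearMap.range_eq_bot.1 h2
    have : g = 1 - f := by rw [← h]; abel
    rw [this]
    exact IsNilpotent.isUnit_one_sub ⟨_, h3⟩

theorem IndecM.unit_or_add [IsArtinian A X] [IsNoetherian A X] (hX : IndecM A X)
    (f g : Module.End A X) (h : IsUnit (f + g)) : IsUnit f ∨ IsUnit g := by
  obtain ⟨u, hu⟩ := h
  have : (↑u⁻¹ * f : Module.End A X) + ↑u⁻¹ * g = 1 := by
    rw [← mul_add, ← hu, Units.inv_mul]
  rcases hX.unit_or _ _ this with h | h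
  · left; simpa using h
  · right; simpa using h

theorem unit_left_of_mul [IsNoetherian A X]
    (f g : Module.End A X) (h : IsUnit (f * g)) : IsUnit f := by
  rw [Module.End.isUnit_iff] at h ⊢
  apply IsNoetherian.bijective_of_surjective_endomorphism
  exact Function.Surjective.of_comp (f := f) (g := g) h.2

/-- A retract of an indecomposable. -/
theorem iso_of_retract (hX : Nontrivial X) (hN : IndecM A N) (f : X →ₗ[A] N) (g : N →ₗ[A] X)
    (h : IsUnit (g ∘ₗ f : Module.End A X)) : Nonempty (X ≃ₗ[A] N) := by
  obtain ⟨u, hu⟩ := h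
  let g' : N →ₗ[A] X := (↑u⁻¹ : Module.End A X) ∘ₗ g
  have hg : g' ∘ₗ f = LinearMap.id := by
    change (↑u⁻¹ : Module.End A X) * (g ∘ₗ f : Module.End A X) = 1
    rw [← hu, Units.inv_mul]
  have hc := LinearMap.isCompl_of_proj (p := LinearMap.range f) (f := f.rangeRestrict ∘ₗ g') (by
    rintro ⟨_, x, rfl⟩
    have := LinearMap.congr_fun hg x
    ext
    simpa using congrArg f this)
  have hi : Function.Injective f := by
    apply Function.Injective.of_comp (f := g')
    rw [← LinearMap.coe_comp, hg]; exact Function.injective_id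
  rcases hN.2 _ _ hc with h1 | h1
  · exfalso
    rw [LinearMap.range_eq_bot] at h1
    obtain ⟨x, y, hxy⟩ := hX
    exact hxy (hi (by simp [h1]))
  · rw [h1] at hc
    have : LinearMap.range f = ⊤ := by simpa using hc.sup_eq_top
    exact ⟨LinearEquiv.ofBijective f ⟨hi, LinearMap.range_eq_top.1 this⟩⟩

/-- complement of a retract. -/
theorem compl_of_retract (f : X →ₗ[A] N) (g : N →ₗ[A] X)
    (h : IsUnit (g ∘ₗ f : Module.End A X)) :
    ∃ V : Submodule A N, Nonempty (N ≃ₗ[A] X × V) := by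
  obtain ⟨u, hu⟩ := h
  let g' : N →ₗ[A] X := (↑u⁻¹ : Module.End A X) ∘ₗ g
  have hg : g' ∘ₗ f = LinearMap.id := by
    change (↑u⁻¹ : Module.End A X) * (g ∘ₗ f : Module.End A X) = 1
    rw [← hu, Units.inv_mul]
  have hc := LinearMap.isCompl_of_proj (p := LinearMap.range f) (f := f.rangeRestrict ∘ₗ g') (by
    rintro ⟨_, x, rfl⟩
    have := LinearMap.congr_fun hg x
    ext
    simpa using congrArg f this)
  have hi : Function.Injective f := by
    apply Function.Injective.of_comp (f := g')
    rw [← LinearMap.coe_comp, hg]; exact Function.injective_id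
  exact ⟨_, ⟨(Submodule.prodEquivOfIsCompl _ _ hc).symm.trans
    ((LinearEquiv.ofInjective f hi).symm.prodCongr (LinearEquiv.refl _ _))⟩⟩

/-- Precomposition action. -/
instance precompModule : Module (Module.End A X)ᵐᵒᵖ (X →ₗ[A] N) where
  smul c f := f ∘ₗ (MulOpposite.unop c : Module.End A X)
  one_smul f := by ext; rfl
  mul_smul a b f := by ext; rfl
  smul_zero a := by ext; rfl
  smul_add a f g := by ext; rfl
  add_smul a b f := by
    ext x
    exact map_add f _ _
  zero_smul f := by
    ext x
    exact map_zero f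

/-- Radical maps from an indecomposable finite length module. -/
def radHom [IsArtinian A X] [IsNoetherian A X] (hX : IndecM A X) (N : Type*)
    [AddCommGroup N] [Module A N] : Submodule (Module.End A X)ᵐᵒᵖ (X →ₗ[A] N) where
  carrier := {f | ∀ g : N →ₗ[A] X, ¬ IsUnit (g ∘ₗ f : Module.End A X)}
  zero_mem' := by
    intro g h
    have := hX.1
    rw [LinearMap.comp_zero] at h
    exact not_isUnit_zero h
  add_mem' := by
    intro a b ha hb g h
    rw [LinearMap.comp_add] at h
    rcases hX.unit_or_add _ _ h with h | h
    · exact ha _ h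
    · exact hb _ h
  smul_mem' := by
    intro c f hf g h
    exact hf g (unit_left_of_mul (g ∘ₗ f : Module.End A X) (MulOpposite.unop c) h)

theorem mem_radHom [IsArtinian A X] [IsNoetherian A X] (hX : IndecM A X) (f : X →ₗ[A] N) :
    f ∈ radHom hX N ↔ ∀ g : N →ₗ[A] X, ¬ IsUnit (g ∘ₗ f : Module.End A X) := Iff.rfl

/-- The length of Hom / rad. -/
noncomputable def multX [IsArtinian A X] [IsNoetherian A X] (hX : IndecM A X) (N : Type*)
    [AddCommGroup N] [Module A N] : ℕ∞ :=
  Module.length (Module.End A X)ᵐᵒᵖ ((X →ₗ[A] N) ⧸ radHom hX N)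

theorem multX_congr [IsArtinian A X] [IsNoetherian A X] (hX : IndecM A X) (e : N ≃ₗ[A] N') :
    multX hX N = multX hX N' := by
  let E : (X →ₗ[A] N) ≃ₗ[(Module.End A X)ᵐᵒᵖ] (X →ₗ[A] N') :=
    { toFun := fun f => e.toLinearMap ∘ₗ f
      invFun := fun f => e.symm.toLinearMap ∘ₗ f
      map_add' := fun f g => by ext; simp
      map_smul' := fun c f => by ext; rfl
      left_inv := fun f => by ext; simp
      right_inv := fun f => by ext; simp }
  refine LinearEquiv.length_eq (Submodule.Quotient.equiv _ _ E ?_)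
  ext f
  rw [Submodule.mem_map_equiv, mem_radHom, mem_radHom]
  constructor
  · intro h g hg
    apply h (g ∘ₗ e.toLinearMap)
    convert hg using 1
    ext x; simp [E]
  · intro h g hg
    exact h (g ∘ₗ e.symm.toLinearMap) hg

theorem multX_prod [IsArtinian A X] [IsNoetherian A X] (hX : IndecM A X) :
    multX hX (N × N') = multX hX N + multX hX N' := by
  let F : (X →ₗ[A] N × N') →ₗ[(Module.End A X)ᵐᵒᵖ]
     ((X →ₗ[A] N) ⧸ radHom hX N) × ((X →ₗ[A] N') ⧸ radHom hX N') :=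
    { toFun := fun f => (Submodule.Quotient.mk (LinearMap.fst A N N' ∘ₗ f),
        Submodule.Quotient.mk (LinearMap.snd A N N' ∘ₗ f))
      map_add' := fun f g => by
        simp [LinearMap.comp_add]
      map_smul' := fun c f => by
        rfl }
  have hF : Function.Surjective F := by
    rintro ⟨a, b⟩
    obtain ⟨a, rfl⟩ := Submodule.Quotient.mk_surjective _ a
    obtain ⟨b, rfl⟩ := Submodule.Quotient.mk_surjective _ b
    exact ⟨a.prod b, rfl⟩
  have hk : LinearMap.ker F = radHom hX (N × N') := by
    ext f
    rw [LinearMap.mem_ker, mem_radHom]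
    change (Submodule.Quotient.mk _, Submodule.Quotient.mk _) = (0, 0) ↔ _
    rw [Prod.mk.injEq, Submodule.Quotient.mk_eq_zero, Submodule.Quotient.mk_eq_zero,
      mem_radHom, mem_radHom]
    constructor
    · rintro ⟨h1, h2⟩ g hg
      have : (g ∘ₗ f : Module.End A X) =
        ((g ∘ₗ LinearMap.inl A N N') ∘ₗ (LinearMap.fst A N N' ∘ₗ f)) +
        ((g ∘ₗ LinearMap.inr A N N') ∘ₗ (LinearMap.snd A N N' ∘ₗ f)) := by
        ext x
        simp [← map_add]
      rw [this] at hg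
      rcases hX.unit_or_add _ _ hg with h | h
      · exact h1 _ h
      · exact h2 _ h
    · intro h
      exact ⟨fun g hg => h (g ∘ₗ LinearMap.fst A N N') hg,
        fun g hg => h (g ∘ₗ LinearMap.snd A N N') hg⟩
  unfold multX
  rw [← Module.length_prod, ← hk]
  exact (F.quotKerEquivOfSurjective hF).length_eq

theorem multX_eq_zero_iff [IsArtinian A X] [IsNoetherian A X] (hX : IndecM A X) :
    multX hX N = 0 ↔ ∀ (f : X →ₗ[A] N) (g : N →ₗ[A] X), ¬ IsUnit (g ∘ₗ f : Module.End A X) := by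
  unfold multX
  rw [Module.length_eq_zero_iff, Submodule.Quotient.subsingleton_iff, Submodule.eq_top_iff']
  rfl

theorem multX_self [IsArtinian A X] [IsNoetherian A X] (hX : IndecM A X) :
    multX hX X = 1 := by
  unfold multX
  rw [Module.length_eq_one_iff, isSimpleModule_iff_isCoatom]
  have := hX.1
  constructor
  · intro h
    have : (LinearMap.id : X →ₗ[A] X) ∈ radHom hX X := by rw [h]; trivial
    exact this LinearMap.id isUnit_one
  · intro W hW
    obtain ⟨f, hfW, hf⟩ := Set.exists_of_ssubset hW
    simp only [SetLike.mem_coe, mem_radHom, not_forall, not_not] at hf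
    obtain ⟨g, hg⟩ := hf
    have hf : IsUnit (f : Module.End A X) := by
      rw [Module.End.isUnit_iff] at hg ⊢
      apply IsArtinian.bijective_of_injective_endomorphism
      exact Function.Injective.of_comp (f := g) (g := f) hg.1
    obtain ⟨u, rfl⟩ := hf
    rw [Submodule.eq_top_iff']
    intro k
    have := W.smul_mem (MulOpposite.op ((↑u⁻¹ : Module.End A X) * k)) hfW
    convert this using 1
    ext x
    change k x = ((u : Module.End A X) * (↑u⁻¹ * k)) x
    rw [← mul_assoc, Units.mul_inv, one_mul]

theorem multX_ne_top [IsArtinian A X] [IsNoetherian A X] (hX : IndecM A X) (n : ℕ) :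
    ∀ (N : Type u) [AddCommGroup N] [Module A N] [IsArtinian A N] [IsNoetherian A N],
    Module.length A N ≤ n → multX hX N ≠ ⊤ := by
  induction n with
  | zero =>
    intro N _ _ _ _ h
    have h : Module.length A N = 0 := by simpa using h
    rw [Module.length_eq_zero_iff] at h
    have : multX hX N = 0 := by
      rw [multX_eq_zero_iff]
      intro f g hu
      have := hX.1
      have : (g ∘ₗ f : Module.End A X) = 0 := by
        ext x
        simp [Subsingleton.elim (f x) 0]
      rw [this] at hu
      exact not_isUnit_zero hu
    simp [this]
  | succ n ih =>
    intro N _ _ _ _ h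
    by_cases h0 : multX hX N = 0
    · simp [h0]
    · rw [multX_eq_zero_iff] at h0
      push Not at h0
      obtain ⟨f, g, hu⟩ := h0
      obtain ⟨V, ⟨e⟩⟩ := compl_of_retract f g hu
      rw [multX_congr hX e, multX_prod, multX_self]
      have hl := e.length_eq
      rw [Module.length_prod] at hl
      have hV : Module.length A V ≤ n := by
        have := hX.1
        have h1 : 1 ≤ Module.length A X := Order.one_le_iff_pos.2 Module.length_pos
        rw [hl] at h
        push_cast at h
        have h2 : 1 + Module.length A V ≤ 1 + n := by
          rw [add_comm 1 (n : ℕ∞)]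
          exact le_trans (by gcongr) h
        exact (ENat.add_le_add_iff_left (by simp)).1 h2
      have := ih V hV
      simp [this]

/-- indecomposable projective modules are hollow. -/
theorem hollow [IsArtinian A M] [IsNoetherian A M] (hM : IndecM A M) [Module.Projective A M]
    (U V : Submodule A M) (h : U ⊔ V = ⊤) : U = ⊤ ∨ V = ⊤ := by
  have hs : Function.Surjective (U.mkQ ∘ₗ V.subtype) := by
    intro y
    obtain ⟨y, rfl⟩ := U.mkQ_surjective y
    have : y ∈ U ⊔ V := by rw [h]; trivial
    obtain ⟨a, ha, b, hb, rfl⟩ := Submodule.mem_sup.1 this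
    refine ⟨⟨b, hb⟩, ?_⟩
    have : U.mkQ a = 0 := by simpa using ha
    rw [map_add, this, zero_add]; rfl
  obtain ⟨k, hk⟩ := Module.projective_lifting_property _ U.mkQ hs
  have := hM.unit_or (V.subtype ∘ₗ k) (1 - V.subtype ∘ₗ k) (by abel)
  rcases this with h | h
  · right
    rw [Module.End.isUnit_iff] at h
    rw [Submodule.eq_top_iff']
    intro x
    obtain ⟨y, rfl⟩ := h.2 x
    simp
  · left
    rw [Module.End.isUnit_iff] at h
    rw [Submodule.eq_top_iff']
    intro x
    obtain ⟨y, rfl⟩ := h.2 x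
    have := LinearMap.congr_fun hk y
    rw [← Submodule.ker_mkQ U, LinearMap.mem_ker, LinearMap.sub_apply, map_sub, sub_eq_zero]
    exact this.symm

theorem indec_quot [IsArtinian A M] [IsNoetherian A M] (hM : IndecM A M) [Module.Projective A M]
    (S : Submodule A M) (hS : S ≠ ⊤) : IndecM A (M ⧸ S) := by
  refine ⟨Submodule.Quotient.nontrivial_iff.2 hS, fun U V h => ?_⟩
  have h1 : U.comap S.mkQ ⊔ V.comap S.mkQ = ⊤ := by
    rw [Submodule.eq_top_iff']
    intro x
    have hx : S.mkQ x ∈ U ⊔ V := by rw [h.sup_eq_top]; trivial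
    obtain ⟨a, ha, b, hb, hab⟩ := Submodule.mem_sup.1 hx
    obtain ⟨a, rfl⟩ := S.mkQ_surjective a
    rw [Submodule.mem_sup]
    refine ⟨a, ha, x - a, ?_, by abel⟩
    rw [Submodule.mem_comap, map_sub, ← hab]
    simpa using hb
  rcases hollow hM _ _ h1 with h2 | h2
  · right
    have : U = ⊤ := by
      rw [← Submodule.map_comap_eq_of_surjective S.mkQ_surjective U, h2]; simp
    simpa [this] using h.inf_eq_bot
  · left
    have : V = ⊤ := by
      rw [← Submodule.map_comap_eq_of_surjective S.mkQ_surjective V, h2]; simp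
    simpa [this] using h.inf_eq_bot

/-- quotient by noniso kernels are noniso. -/
theorem iso_of_quot_iso [IsNoetherian A M] [Module.Projective A M]
    (S T : Submodule A M) (hT : ∀ U : Submodule A M, U ⊔ T = ⊤ → U = ⊤)
    (e : (M ⧸ S) ≃ₗ[A] (M ⧸ T)) : Nonempty (S ≃ₗ[A] T) := by
  obtain ⟨k, hk⟩ := Module.projective_lifting_property T.mkQ (e.toLinearMap ∘ₗ S.mkQ) T.mkQ_surjective
  have hk' : ∀ x, T.mkQ (k x) = e (S.mkQ x) := LinearMap.congr_fun hk
  have hr : LinearMap.range k = ⊤ := by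
    apply hT
    rw [Submodule.eq_top_iff']
    intro x
    obtain ⟨y, hy⟩ := S.mkQ_surjective (e.symm (T.mkQ x))
    rw [Submodule.mem_sup]
    refine ⟨k y, ⟨y, rfl⟩, x - k y, ?_, by abel⟩
    rw [← Submodule.ker_mkQ T, LinearMap.mem_ker, map_sub, hk', hy]
    simp
  have hb := IsNoetherian.bijective_of_surjective_endomorphism k (LinearMap.range_eq_top.1 hr)
  let K := LinearEquiv.ofBijective k hb
  have : S.map (K : M →ₗ[A] M) = T := by
    ext x
    constructor
    · rintro ⟨y, hy, rfl⟩
      rw [← Submodule.ker_mkQ T, LinearMap.mem_ker]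
      have : S.mkQ y = 0 := by simpa using hy
      exact (hk' y).trans (by rw [this, map_zero])
    · intro hx
      obtain ⟨y, rfl⟩ := hb.2 x
      refine ⟨y, ?_, rfl⟩
      have : T.mkQ (k y) = 0 := by simpa using hx
      rw [hk', map_eq_zero_iff e e.injective] at this
      simpa using this
  exact ⟨K.ofSubmodules S T this⟩

end Generic

section FG

variable {R : Type u} [Ring R]

theorem ITcls_of_prod {M N L : FGMod R} (e : M ≃ₗ[Rᵐᵒᵖ] (N × L : Type u)) :
    ITcls R M = ITcls R N + ITcls R L := by
  have h : FreeAbelianGroup.of M - FreeAbelianGroup.of N - FreeAbelianGroup.of L ∈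
      AddSubgroup.closure (ITRel R) :=
    AddSubgroup.subset_closure (Or.inl ⟨M, N, L, ⟨e⟩, rfl⟩)
  have h2 : ((FreeAbelianGroup.of M - FreeAbelianGroup.of N - FreeAbelianGroup.of L :
      FreeAbelianGroup (FGMod R)) : FreeAbelianGroup (FGMod R) ⧸ AddSubgroup.closure (ITRel R)) = 0 :=
    (QuotientAddGroup.eq_zero_iff _).2 h
  have h3 : ITcls R M - ITcls R N - ITcls R L = 0 := h2
  rw [sub_sub, sub_eq_zero] at h3
  exact h3

theorem ITcls_proj {P : FGMod R} (h : P.Proj) : ITcls R P = 0 :=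
  (QuotientAddGroup.eq_zero_iff _).2 (AddSubgroup.subset_closure (Or.inr ⟨P, h, rfl⟩))

theorem ITcls_iso {M N : FGMod R} (e : M ≃ₗ[Rᵐᵒᵖ] N) : ITcls R M = ITcls R N := by
  let Z : FGMod R := ⟨PUnit.{u+1}⟩
  have hZ : Z.Proj := inferInstanceAs (Module.Projective Rᵐᵒᵖ PUnit.{u+1})
  have := ITcls_of_prod (M := M) (N := N) (L := Z)
    (e.trans (LinearEquiv.prodUnique (R := Rᵐᵒᵖ) (M := N) (M₂ := PUnit.{u+1})).symm)
  rw [this, ITcls_proj hZ, add_zero]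

theorem proj_of_retract {X Q : FGMod R} (hQ : Q.Proj) (f : X →ₗ[Rᵐᵒᵖ] Q) (g : Q →ₗ[Rᵐᵒᵖ] X)
    (h : IsUnit (g ∘ₗ f : Module.End Rᵐᵒᵖ X)) : X.Proj := by
  obtain ⟨u, hu⟩ := h
  have : Module.Projective Rᵐᵒᵖ Q := hQ
  refine Module.Projective.of_split f ((↑u⁻¹ : Module.End Rᵐᵒᵖ X) ∘ₗ g) ?_
  change (↑u⁻¹ : Module.End Rᵐᵒᵖ X) * (g ∘ₗ f : Module.End Rᵐᵒᵖ X) = 1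
  rw [← hu, Units.inv_mul]

variable [IsArtinianRing Rᵐᵒᵖ]

theorem multX_fin {X : FGMod R} (hX : IndecM Rᵐᵒᵖ X) (N : FGMod R) : multX hX N ≠ ⊤ :=
  multX_ne_top hX (Module.length Rᵐᵒᵖ N).toNat N
    (by rw [ENat.natCast_toNat Module.length_ne_top])

/-- multiplicity of a nonprojective indecomposable. -/
noncomputable def multHom {X : FGMod R} (hX : IndecM Rᵐᵒᵖ X) (hp : ¬ X.Proj) : ITK R →+ ℤ :=
  QuotientAddGroup.lift (AddSubgroup.closure (ITRel R))
    (FreeAbelianGroup.lift (fun N : FGMod R => ((multX hX N).toNat : ℤ))) (by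
      rw [AddSubgroup.closure_le]
      rintro x (⟨M, N, L, ⟨e⟩, rfl⟩ | ⟨Q, hQ, rfl⟩)
      · have : multX hX M = multX hX N + multX hX L := by
          rw [multX_congr hX e, multX_prod]
        simp only [SetLike.mem_coe, AddMonoidHom.mem_ker, map_sub, FreeAbelianGroup.lift_apply_of]
        rw [this, ENat.toNat_add (multX_fin hX N) (multX_fin hX L)]
        push_cast
        ring
      · have : multX hX Q = 0 := by
          rw [multX_eq_zero_iff]
          intro f g h
          exact hp (proj_of_retract hQ f g h)
        simp [this])

theorem multHom_cls {X : FGMod R} (hX : IndecM Rᵐᵒᵖ X) (hp : ¬ X.Proj) (N : FGMod R) :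
    multHom hX hp (ITcls R N) = ((multX hX N).toNat : ℤ) := by
  change FreeAbelianGroup.lift _ (FreeAbelianGroup.of N) = _
  rw [FreeAbelianGroup.lift_apply_of]

theorem multX_noniso {X N : FGMod R} (hX : IndecM Rᵐᵒᵖ X) (hN : IndecM Rᵐᵒᵖ N) (h : ¬ X.Iso N) :
    multX hX N = 0 := by
  rw [multX_eq_zero_iff]
  intro f g hu
  exact h (iso_of_retract hX.1 hN f g hu)

/-- indecomposable summands of a sum of three indecomposables. -/
theorem summand_three {N M₁ M₂ M₃ : FGMod R} (h₁ : M₁.Indec) (h₂ : M₂.Indec) (h₃ : M₃.Indec)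
    (hN : N.Indec) (hs : N.IsSummand (M₁.prod (M₂.prod M₃))) :
    N.Iso M₁ ∨ N.Iso M₂ ∨ N.Iso M₃ := by
  obtain ⟨U, V, hUV, ⟨e⟩⟩ := hs
  let T := M₁.carrier × (M₂.carrier × M₃.carrier)
  let ι : N →ₗ[Rᵐᵒᵖ] T := U.subtype ∘ₗ e.toLinearMap
  let π : T →ₗ[Rᵐᵒᵖ] N := e.symm.toLinearMap ∘ₗ U.projectionOnto V hUV
  have hπ : ∀ x, π (ι x) = x := by
    intro x
    change e.symm (U.projectionOnto V hUV (e x : _)) = x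
    simp
  have hN' : IndecM Rᵐᵒᵖ N := hN
  let a : Module.End Rᵐᵒᵖ N := (π ∘ₗ LinearMap.inl _ _ _) ∘ₗ (LinearMap.fst _ _ _ ∘ₗ ι)
  let b : Module.End Rᵐᵒᵖ N := (π ∘ₗ LinearMap.inr _ _ _ ∘ₗ LinearMap.inl _ _ _) ∘ₗ
    (LinearMap.fst _ _ _ ∘ₗ LinearMap.snd _ _ _ ∘ₗ ι)
  let c : Module.End Rᵐᵒᵖ N := (π ∘ₗ LinearMap.inr _ _ _ ∘ₗ LinearMap.inr _ _ _) ∘ₗ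
    (LinearMap.snd _ _ _ ∘ₗ LinearMap.snd _ _ _ ∘ₗ ι)
  have habc : a + (b + c) = 1 := by
    ext x
    have := hπ x
    change π (_, _) + (π (_, (_, _)) + π (_, (_, _))) = x
    rw [← map_add, ← map_add, ← this]
    congr 1
    rw [this]
    refine Prod.ext ?_ (Prod.ext ?_ ?_)
    · change (ι x).1 + (0 + 0) = (ι x).1
      simp
    · change 0 + ((ι x).2.1 + 0) = (ι x).2.1
      simp
    · change 0 + (0 + (ι x).2.2) = (ι x).2.2
      simp
  rcases hN'.unit_or _ _ habc with h | h
  · exact Or.inl (iso_of_retract hN.1 h₁ _ _ h)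
  · right
    rcases hN'.unit_or_add _ _ h with h | h
    · exact Or.inl (iso_of_retract hN.1 h₂ _ _ h)
    · exact Or.inr (iso_of_retract hN.1 h₃ _ _ h)

theorem not_proj_quot {P : FGMod R} (hP : P.Indec) (S : Submodule Rᵐᵒᵖ P)
    (hS : S ≠ ⊤) (hS' : S ≠ ⊥) {M : FGMod R} (e : M ≃ₗ[Rᵐᵒᵖ] (P.carrier ⧸ S)) : ¬ M.Proj := by
  intro h
  have h1 : Module.Projective Rᵐᵒᵖ M := h
  have h2 : Module.Projective Rᵐᵒᵖ (P.carrier ⧸ S) := Module.Projective.of_equiv e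
  obtain ⟨s, hs⟩ := Module.projective_lifting_property S.mkQ LinearMap.id S.mkQ_surjective
  have hc := LinearMap.isCompl_of_proj (p := LinearMap.range s)
    (f := s.rangeRestrict ∘ₗ S.mkQ) (by
      rintro ⟨_, x, rfl⟩
      have := LinearMap.congr_fun hs x
      ext
      simpa using congrArg s this)
  have hi : Function.Injective s := by
    apply Function.Injective.of_comp (f := S.mkQ)
    rw [← LinearMap.coe_comp, hs]; exact Function.injective_id
  have hk : LinearMap.ker (s.rangeRestrict ∘ₗ S.mkQ) = S := by
    rw [LinearMap.ker_comp_of_ker_eq_bot, Submodule.ker_mkQ]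
    rw [LinearMap.ker_rangeRestrict, LinearMap.ker_eq_bot.2 hi]
  rw [hk] at hc
  rcases hP.2 _ _ hc with h | h
  · rw [h] at hc
    exact hS (by simpa using hc.sup_eq_top)
  · exact hS' h

theorem syzygy_quot {P : FGMod R} (hP : P.Indec) (hproj : P.Proj) (S : Submodule Rᵐᵒᵖ P)
    (hS : S ≠ ⊤) {M N : FGMod R} (e : M ≃ₗ[Rᵐᵒᵖ] (P.carrier ⧸ S)) (e' : N ≃ₗ[Rᵐᵒᵖ] S) :
    IsSyzygy M N := by
  have hk : LinearMap.ker (e.symm.toLinearMap ∘ₗ S.mkQ) = S := by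
    rw [LinearMap.ker_comp_of_ker_eq_bot, Submodule.ker_mkQ]
    simp
  refine ⟨P, e.symm.toLinearMap ∘ₗ S.mkQ, ⟨hproj, ?_, ?_⟩, ?_⟩
  · exact e.symm.surjective.comp S.mkQ_surjective
  · intro U hU
    rw [hk] at hU
    have : Module.Projective Rᵐᵒᵖ P := hproj
    exact (hollow (A := Rᵐᵒᵖ) (M := P) hP U S hU).resolve_right hS
  · rw [hk]
    exact ⟨e'⟩

theorem summand_of_equiv {N M L : FGMod R} (e : M ≃ₗ[Rᵐᵒᵖ] (N × L : Type u)) :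
    N.IsSummand M := by
  refine ⟨(LinearMap.range (LinearMap.inl Rᵐᵒᵖ N L)).map (e.symm : (N × L : Type u) →ₗ[Rᵐᵒᵖ] M),
    (LinearMap.range (LinearMap.inr Rᵐᵒᵖ N L)).map (e.symm : (N × L : Type u) →ₗ[Rᵐᵒᵖ] M), ?_, ?_⟩
  · exact (Submodule.orderIsoMapComap e.symm).isCompl LinearMap.isCompl_range_inl_inr
  · exact ⟨(LinearEquiv.ofInjective _ LinearMap.inl_injective).trans (e.symm.submoduleMap _)⟩

end FG

section Rank

variable {K : Type*} [AddCommGroup K]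

theorem rank_drop (H : Submodule ℤ K) [Module.Finite ℤ H] (f : K →ₗ[ℤ] K) (x : K) (hx : x ∈ H)
    (hfx : f x = 0) (m : K →+ ℤ) (hm : m x ≠ 0) :
    Module.finrank ℤ (H.map f) < Module.finrank ℤ H := by
  have h1 := Submodule.finrank_quotient_add_finrank (LinearMap.ker (f.domRestrict H))
  rw [(f.domRestrict H).quotKerEquivRange.finrank_eq, LinearMap.range_domRestrict] at h1
  have h2 : Module.finrank ℤ (LinearMap.ker (f.domRestrict H)) ≠ 0 := by
    intro h0
    rw [Module.finrank_eq_zero_iff] at h0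
    obtain ⟨a, ha, h⟩ := h0 ⟨⟨x, hx⟩, by simpa using hfx⟩
    have h3 : a • x = 0 := by
      have := congrArg Subtype.val (congrArg Subtype.val h)
      simpa using this
    have h4 := congrArg m h3
    rw [map_zsmul, map_zero, smul_eq_mul] at h4
    rcases mul_eq_zero.1 h4 with h | h
    · exact ha h
    · exact hm h
  omega

theorem antitone_stab (a : ℕ → ℕ) (h : Antitone a) : ∃ n, ∀ i, n ≤ i → a i = a n := by
  obtain ⟨n, hn⟩ := WellFoundedGT.monotone_chain_condition (α := ℕᵒᵈ)
    ⟨fun i => OrderDual.toDual (a i), fun i j hij => h hij⟩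
  exact ⟨n, fun i hi => (hn i hi).symm⟩

theorem one_le_phi (R : Type u) [Ring R] (OmK : AddMonoid.End (ITK R)) (M : FGMod R)
    (hfin : (ITgen R M).FG) (x : ITK R) (hx : x ∈ ITgen R M) (h0 : OmK x = 0) (m : ITK R →+ ℤ)
    (hm : m x ≠ 0) : 1 ≤ phiIT R OmK M := by
  let H : Submodule ℤ (ITK R) := AddSubgroup.toIntSubmodule (ITgen R M)
  have hH : H.FG := by
    rw [Submodule.fg_iff_addSubgroup_fg]
    exact hfin
  have key : ∀ i, rkIT R ((ITgen R M).map ((OmK ^ i : AddMonoid.End (ITK R)) : ITK R →+ ITK R)) =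
      Module.finrank ℤ (H.map ((AddMonoidHom.toIntLinearMap OmK : Module.End ℤ (ITK R)) ^ i)) := by
    intro i
    unfold rkIT
    have hp : ∀ y, ((AddMonoidHom.toIntLinearMap OmK : Module.End ℤ (ITK R)) ^ i) y =
        (OmK ^ i : AddMonoid.End (ITK R)) y := by
      induction i with
      | zero => intro y; rfl
      | succ i ih =>
        intro y
        rw [pow_succ', pow_succ']
        change OmK _ = OmK _
        rw [ih]
        rfl
    have : AddSubgroup.toIntSubmodule
        ((ITgen R M).map ((OmK ^ i : AddMonoid.End (ITK R)) : ITK R →+ ITK R)) =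
        H.map ((AddMonoidHom.toIntLinearMap OmK : Module.End ℤ (ITK R)) ^ i) := by
      ext z
      constructor
      · rintro ⟨y, hy, rfl⟩
        exact ⟨y, hy, hp y⟩
      · rintro ⟨y, hy, rfl⟩
        exact ⟨y, hy, (hp y).symm⟩
    rw [this]
  unfold phiIT
  simp only [key]
  set f : Module.End ℤ (ITK R) := AddMonoidHom.toIntLinearMap OmK
  have hf : ∀ i, Module.Finite ℤ (H.map (f ^ i)) := fun i => Module.Finite.iff_fg.2 (hH.map _)
  have hH' : Module.Finite ℤ H := Module.Finite.iff_fg.2 hH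
  have hanti : Antitone fun i => Module.finrank ℤ (H.map (f ^ i)) := by
    apply antitone_nat_of_succ_le
    intro i
    have := hf i
    have h2 := Submodule.finrank_map_le f (H.map (f ^ i))
    rw [← Submodule.map_comp] at h2
    rw [pow_succ']
    exact h2
  obtain ⟨n, hn⟩ := antitone_stab _ hanti
  rw [Nat.one_le_iff_ne_zero]
  intro hz
  rw [Nat.sInf_eq_zero] at hz
  rcases hz with hz | hz
  · have h1 := hz 1 (by omega)
    have h2 := rank_drop H f x hx h0 m hm
    rw [pow_one, pow_zero] at h1
    have h3 : H.map (1 : Module.End ℤ (ITK R)) = H := Submodule.map_id H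
    rw [h3] at h1
    omega
  · have : n ∈ (∅ : Set ℕ) := by rw [← hz]; exact hn
    exact this

end Rank

/-- If an indecomposable projective `P` contains two non-isomorphic
simple submodules `S₁, S₂` (in its socle), then `P/S₁`, `P/S₂`, `P/(S₁ ⊕ S₂)` are
pairwise non-isomorphic indecomposable modules and `φ(M₁ ⊕ M₂ ⊕ M₃) ≥ 1`. -/
theorem phi_ge_one_of_two_noniso_simples_in_socle (R : Type u) [Ring R]
    [IsArtinianRing Rᵐᵒᵖ]
    (OmK : AddMonoid.End (ITK R)) (hOm : IsSyzygyEnd R OmK)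
    (P : FGMod R) (hind : P.Indec) (hproj : P.Proj)
    (S₁ S₂ : Submodule Rᵐᵒᵖ P)
    (hS₁ : IsSimpleModule Rᵐᵒᵖ S₁) (hS₂ : IsSimpleModule Rᵐᵒᵖ S₂)
    (hniso : ¬ Nonempty (S₁ ≃ₗ[Rᵐᵒᵖ] S₂))
    (M₁ M₂ M₃ : FGMod R)
    (hM₁ : Nonempty (M₁ ≃ₗ[Rᵐᵒᵖ] (P.carrier ⧸ S₁)))
    (hM₂ : Nonempty (M₂ ≃ₗ[Rᵐᵒᵖ] (P.carrier ⧸ S₂)))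
    (hM₃ : Nonempty (M₃ ≃ₗ[Rᵐᵒᵖ] (P.carrier ⧸ (S₁ ⊔ S₂)))) :
    M₁.Indec ∧ M₂.Indec ∧ M₃.Indec ∧
      ¬ M₁.Iso M₂ ∧ ¬ M₁.Iso M₃ ∧ ¬ M₂.Iso M₃ ∧
      1 ≤ phiIT R OmK (M₁.prod (M₂.prod M₃)) := by
  obtain ⟨e₁⟩ := hM₁
  obtain ⟨e₂⟩ := hM₂
  obtain ⟨e₃⟩ := hM₃
  have hP : IndecM Rᵐᵒᵖ P := hind
  have hPp : Module.Projective Rᵐᵒᵖ P := hproj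
  have a₁ : IsAtom S₁ := isSimpleModule_iff_isAtom.1 hS₁
  have a₂ : IsAtom S₂ := isSimpleModule_iff_isAtom.1 hS₂
  have hne : S₁ ≠ S₂ := by
    rintro rfl
    exact hniso ⟨LinearEquiv.refl _ _⟩
  have hdis : Disjoint S₁ S₂ := a₁.disjoint_of_ne a₂ hne
  have t₁ : S₁ ≠ ⊤ := by
    rintro h
    rw [h, top_disjoint] at hdis
    exact a₂.1 hdis
  have t₂ : S₂ ≠ ⊤ := by
    rintro h
    rw [h, disjoint_top] at hdis
    exact a₁.1 hdis
  have t₃ : S₁ ⊔ S₂ ≠ ⊤ := by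
    intro h
    rcases hollow hP _ _ h with h | h
    · exact t₁ h
    · exact t₂ h
  have b₃ : S₁ ⊔ S₂ ≠ ⊥ := fun h => a₁.1 (sup_eq_bot_iff.1 h).1
  have i₁ : IndecM Rᵐᵒᵖ M₁ := (indec_quot hP S₁ t₁).congr e₁.symm
  have i₂ : IndecM Rᵐᵒᵖ M₂ := (indec_quot hP S₂ t₂).congr e₂.symm
  have i₃ : IndecM Rᵐᵒᵖ M₃ := (indec_quot hP _ t₃).congr e₃.symm
  have esup : (S₁ × S₂) ≃ₗ[Rᵐᵒᵖ] (S₁ ⊔ S₂ : Submodule Rᵐᵒᵖ P) := by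
    have h1 : LinearMap.range (S₁.subtype.coprod S₂.subtype) = S₁ ⊔ S₂ := by
      rw [LinearMap.range_coprod]; simp
    rw [← h1]
    refine LinearEquiv.ofInjective _ ?_
    rw [← LinearMap.ker_eq_bot, LinearMap.ker_coprod_of_disjoint_range]
    · simp
    · simpa using hdis
  have hlen : Module.length Rᵐᵒᵖ (S₁ ⊔ S₂ : Submodule Rᵐᵒᵖ P) = 2 := by
    rw [← esup.length_eq, Module.length_prod, Module.length_eq_one, Module.length_eq_one]
    norm_num
  have sup_of : ∀ T : Submodule Rᵐᵒᵖ P, T ≠ ⊤ → ∀ U : Submodule Rᵐᵒᵖ P, U ⊔ T = ⊤ → U = ⊤ :=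
    fun T hT U h => (hollow hP U T h).resolve_right hT
  have n₁₂ : ¬ M₁.Iso M₂ := by
    rintro ⟨e⟩
    exact hniso (iso_of_quot_iso S₁ S₂ (sup_of _ t₂) (e₁.symm.trans (e.trans e₂)))
  have n₁₃ : ¬ M₁.Iso M₃ := by
    rintro ⟨e⟩
    obtain ⟨k⟩ := iso_of_quot_iso S₁ (S₁ ⊔ S₂) (sup_of _ t₃) (e₁.symm.trans (e.trans e₃))
    have := k.length_eq
    rw [hlen, Module.length_eq_one] at this
    norm_num at this
  have n₂₃ : ¬ M₂.Iso M₃ := by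
    rintro ⟨e⟩
    obtain ⟨k⟩ := iso_of_quot_iso S₂ (S₁ ⊔ S₂) (sup_of _ t₃) (e₂.symm.trans (e.trans e₃))
    have := k.length_eq
    rw [hlen, Module.length_eq_one] at this
    norm_num at this
  refine ⟨i₁, i₂, i₃, n₁₂, n₁₃, n₂₃, ?_⟩
  have p₁ := not_proj_quot hind S₁ t₁ a₁.1 e₁
  have p₂ := not_proj_quot hind S₂ t₂ a₂.1 e₂
  have p₃ := not_proj_quot hind _ t₃ b₃ e₃
  have mem₁ : ITcls R M₁ ∈ ITgen R (M₁.prod (M₂.prod M₃)) :=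
    AddSubgroup.subset_closure ⟨M₁, summand_of_equiv (L := M₂.prod M₃)
      (LinearEquiv.refl Rᵐᵒᵖ (M₁.carrier × (M₂.carrier × M₃.carrier))), i₁, p₁, rfl⟩
  have mem₂ : ITcls R M₂ ∈ ITgen R (M₁.prod (M₂.prod M₃)) :=
    AddSubgroup.subset_closure ⟨M₂, summand_of_equiv (L := M₁.prod M₃)
      (((LinearEquiv.prodAssoc Rᵐᵒᵖ M₁ M₂ M₃).symm.trans
        ((LinearEquiv.prodComm Rᵐᵒᵖ M₁ M₂).prodCongr (LinearEquiv.refl Rᵐᵒᵖ M₃))).trans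
        (LinearEquiv.prodAssoc Rᵐᵒᵖ M₂ M₁ M₃)), i₂, p₂, rfl⟩
  have mem₃ : ITcls R M₃ ∈ ITgen R (M₁.prod (M₂.prod M₃)) :=
    AddSubgroup.subset_closure ⟨M₃, summand_of_equiv (L := M₁.prod M₂)
      ((LinearEquiv.prodAssoc Rᵐᵒᵖ M₁ M₂ M₃).symm.trans
        (LinearEquiv.prodComm Rᵐᵒᵖ (M₁.carrier × M₂.carrier) M₃)), i₃, p₃, rfl⟩
  let F₁ : FGMod R := ⟨S₁⟩
  let F₂ : FGMod R := ⟨S₂⟩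
  let F₃ : FGMod R := ⟨(S₁ ⊔ S₂ : Submodule Rᵐᵒᵖ P)⟩
  have o₁ := hOm M₁ F₁ (syzygy_quot hind hproj S₁ t₁ e₁ (LinearEquiv.refl _ _))
  have o₂ := hOm M₂ F₂ (syzygy_quot hind hproj S₂ t₂ e₂ (LinearEquiv.refl _ _))
  have o₃ := hOm M₃ F₃ (syzygy_quot hind hproj _ t₃ e₃ (LinearEquiv.refl _ _))
  have hF : ITcls R F₃ = ITcls R F₁ + ITcls R F₂ :=
    ITcls_of_prod (M := F₃) (N := F₁) (L := F₂) esup.symm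
  refine one_le_phi R OmK _ ?_ (ITcls R M₃ - (ITcls R M₁ + ITcls R M₂)) ?_ ?_ (multHom i₃ p₃) ?_
  · rw [AddSubgroup.fg_iff]
    refine ⟨_, rfl, Set.Finite.subset
      (Set.toFinite {ITcls R M₁, ITcls R M₂, ITcls R M₃}) ?_⟩
    rintro x ⟨N, hs, hN, -, rfl⟩
    rcases summand_three i₁ i₂ i₃ hN hs with ⟨⟨e⟩⟩ | ⟨⟨e⟩⟩ | ⟨⟨e⟩⟩
    · simp [ITcls_iso e]
    · simp [ITcls_iso e]
    · simp [ITcls_iso e]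
  · exact sub_mem mem₃ (add_mem mem₁ mem₂)
  · rw [map_sub, map_add, o₁, o₂, o₃, hF, sub_self]
  · rw [map_sub, map_add, multHom_cls, multHom_cls, multHom_cls, multX_self,
      multX_noniso i₃ i₁ (fun ⟨e⟩ => n₁₃ ⟨e.symm⟩), multX_noniso i₃ i₂ (fun ⟨e⟩ => n₂₃ ⟨e.symm⟩)]
    simp
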